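/- arXiv:1008.1007 — 4 statements merged into one kernel-verified Lean document; each statement's English description precedes it below -/
import Mathlib

section
/- The R-submodule of R[t] generated by the elements r'_n for n ≥ 2 is equal to the R-submodule S of R[t] generated by the elements g_n for n ≥ 2. -/
open Polynomial
open LaurentPolynomial (T)

noncomputable section

abbrev R : Type := LaurentPolynomial ℤ


/-- `Q` is the family of polynomials `Q n ∈ R[t]` (for `n ≥ -2`) defined by `Q (-2) = -1`,
`Q (-1) = 0` and the recurrence `Q n = t Q (n-1) - Q (n-2)` for `n ≥ 0`. -/
def IsQ (Q : ℤ → R[X]) : Prop :=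
  Q (-2) = -1 ∧ Q (-1) = 0 ∧ ∀ n : ℤ, 0 ≤ n → Q n = X * Q (n - 1) - Q (n - 2)

/-!
Write `a n = A ^ (n + 1) + A ^ (-n - 1)`, a solution of `a n = s * a (n - 2) - a (n - 4)` with
`s = A ^ 2 + A ^ (-2)`. The sums of powers of `A` in `g n` are values at `s` of the Chebyshev
polynomials `S`, which satisfy the same recurrence. Extending `g` to indices `n ≥ -2` by these
values makes `g n` vanish for `n < 2` and gives `r' n = g n - s * g (n - 2) + g (n - 4)` for all
`n ≥ 2`, so that the passage between the two families is unitriangular.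
-/

section Span

variable {K M ι : Type*} [Ring K] [AddCommGroup M] [Module K M]

open Submodule in
theorem span_image_eq_of_sub_mem_span {rel : ι → ι → Prop} {s : Set ι} (hs : s.WellFoundedOn rel)
    {f g : ι → M} (h : ∀ i ∈ s, f i - g i ∈ span K (g '' {j ∈ s | rel j i})) :
    span K (f '' s) = span K (g '' s) := by
  apply le_antisymm <;> rw [span_le, Set.image_subset_iff]
  · intro i hi
    have hsub : f i - g i ∈ span K (g '' s) :=
      span_mono (Set.image_mono (Set.sep_subset _ _)) (h i hi)
    exact (sub_mem_iff_left _ (subset_span (Set.mem_image_of_mem g hi))).1 hsub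
  · intro i hi
    refine hs.induction hi fun i hi ih => ?_
    have hsub : f i - g i ∈ span K (f '' s) :=
      span_le.2 (Set.image_subset_iff.2 fun j hj => ih j hj.1 hj.2) (h i hi)
    exact (sub_mem_iff_right _ (subset_span (Set.mem_image_of_mem f hi))).1 hsub

end Span

section Relators

variable {K M : Type*} [CommRing K] [AddCommGroup M] [Module K M]

/-- The relators `r' n` of the theorem, for arbitrary coefficients `a` (there
`a n = A ^ (n + 1) + A ^ (-n - 1)`) and an arbitrary sequence `q` in place of `Q`. -/
def relator (a : ℤ → K) (q : ℤ → M) (n : ℤ) : M :=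
  a n • (q n - q (n - 2)) - a (n - 4) • (q (n - 2) - q (n - 4))

/-- The generators `g n` of the theorem, for arbitrary `a` and `q`: among the terms of `q` with
positive index only `q n` and, for `n` odd, `q 1` occur. The parity of `n` enters through
`n % 2 ∈ {0, 1}`, and the sum of powers of `A` is replaced by a Chebyshev polynomial at `s`, which
makes sense for negative `n` too. -/
def reducedRelator (s : K) (a : ℤ → K) (q : ℤ → M) (n : ℤ) : M :=
  a n • (q n - q (n % 2)) -
    ((Chebyshev.S K (n / 2 - 1)).eval s * a (n % 2 - 2)) • (q (n % 2) - q (n % 2 - 2))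

theorem relator_eq_reducedRelator {s : K} {a : ℤ → K} {n : ℤ}
    (ha : a n = s * a (n - 2) - a (n - 4)) (q : ℤ → M) :
    relator a q n = reducedRelator s a q n - s • reducedRelator s a q (n - 2) +
      reducedRelator s a q (n - 4) := by
  have hS : (Chebyshev.S K (n / 2 - 1)).eval s = s * (Chebyshev.S K (n / 2 - 2)).eval s -
      (Chebyshev.S K (n / 2 - 3)).eval s := by
    simp [Chebyshev.S_eq K (n / 2 - 1), sub_sub]
  simp only [relator, reducedRelator,
    show (n - 2) % 2 = n % 2 by lia, show (n - 4) % 2 = n % 2 by lia,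
    show (n - 2) / 2 - 1 = n / 2 - 2 by lia, show (n - 4) / 2 - 1 = n / 2 - 3 by lia, hS, ha]
  module

theorem reducedRelator_eq_zero (s : K) (a : ℤ → K) (q : ℤ → M) {n : ℤ} (hn : -2 ≤ n)
    (hn' : n < 2) : reducedRelator s a q n = 0 := by
  obtain h | h : n / 2 = -1 ∨ n / 2 = 0 := by lia
  · have hmod : n % 2 - 2 = n := by lia
    simp only [reducedRelator, h, hmod, show (-1 - 1 : ℤ) = -2 by rfl, Chebyshev.S_neg_two,
      eval_neg, eval_one]
    module
  · have hmod : n % 2 = n := by lia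
    simp [reducedRelator, h, hmod]

theorem stmt_4_general {s : K} {a : ℤ → K} (ha : ∀ n, 2 ≤ n → a n = s * a (n - 2) - a (n - 4))
    (q : ℤ → M) :
    Submodule.span K (relator a q '' {n : ℤ | 2 ≤ n}) =
      Submodule.span K (reducedRelator s a q '' {n : ℤ | 2 ≤ n}) := by
  have hwf : {n : ℤ | 2 ≤ n}.WellFoundedOn (· < ·) := BddBelow.wellFoundedOn_lt ⟨2, fun _ => id⟩
  refine span_image_eq_of_sub_mem_span hwf fun n (hn : 2 ≤ n) => ?_
  set N := Submodule.span K (reducedRelator s a q '' {j ∈ {n : ℤ | 2 ≤ n} | j < n})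
  have hmem {j : ℤ} (hj : -2 ≤ j) (hjn : j < n) : reducedRelator s a q j ∈ N := by
    obtain h | h := lt_or_ge j 2
    · simp [reducedRelator_eq_zero s a q hj h]
    · exact Submodule.subset_span (Set.mem_image_of_mem _ ⟨h, hjn⟩)
  have hsub : relator a q n - reducedRelator s a q n =
      reducedRelator s a q (n - 4) - s • reducedRelator s a q (n - 2) := by
    rw [relator_eq_reducedRelator (ha n hn)]
    abel
  rw [hsub]
  exact N.sub_mem (hmem (by lia) (by lia)) (N.smul_mem s (hmem (by lia) (by lia)))

end Relators

section LaurentSums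

variable {K : Type*} [CommRing K]

theorem chebyshev_S_eval_add_of_mul_eq_one {x y : K} (hxy : x * y = 1) (n : ℕ) :
    (Chebyshev.S K n).eval (x + y) = x * (Chebyshev.S K (n - 1)).eval (x + y) + y ^ n := by
  induction n with
  | zero => simp
  | succ n ih =>
    have hS := congrArg (eval (x + y)) (Chebyshev.S_add_one K n)
    simp only [eval_sub, eval_mul, eval_X] at hS
    push_cast
    rw [hS, add_sub_cancel_right, pow_succ]
    linear_combination y * ih + (Chebyshev.S K (n - 1)).eval (x + y) * hxy

theorem sum_Icc_T_eq_chebyshev_S (j : ℤ) (m : ℕ) :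
    ∑ k ∈ Finset.Icc (1 : ℤ) m, (T (j * (m + 1 - 2 * k)) : LaurentPolynomial K) =
      (Chebyshev.S (LaurentPolynomial K) (m - 1)).eval (T j + T (-j)) := by
  induction m with
  | zero => simp
  | succ m ih =>
    have hIcc : Finset.Icc (1 : ℤ) (m + 1) = insert (m + 1 : ℤ) (Finset.Icc (1 : ℤ) m) := by grind
    have hterm (k : ℤ) : (T (j * (m + 1 + 1 - 2 * k)) : LaurentPolynomial K) =
        T j * T (j * (m + 1 - 2 * k)) := by
      rw [← LaurentPolynomial.T_add]
      ring_nf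
    have hlast : (T (j * (m + 1 + 1 - 2 * (m + 1))) : LaurentPolynomial K) = T (-j) ^ m := by
      rw [LaurentPolynomial.T_pow]
      ring_nf
    have hinv : T j * T (-j) = (1 : LaurentPolynomial K) := by
      rw [← LaurentPolynomial.T_add, add_neg_cancel, LaurentPolynomial.T_zero]
    push_cast
    rw [hIcc, Finset.sum_insert (by simp), hlast, add_sub_cancel_right,
      chebyshev_S_eval_add_of_mul_eq_one hinv, ← ih, Finset.mul_sum, add_comm]
    simp only [hterm]

variable (K) in
/-- The coefficient `A ^ (n + 1) + A ^ (-n - 1)` of the relators, a symmetric Laurent polynomial;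
the index is shifted by one so that it matches the index of `Q n`. -/
def symmT (n : ℤ) : LaurentPolynomial K :=
  T (n + 1) + T (-n - 1)

theorem symmT_eq_mul_sub (n : ℤ) :
    symmT K n = (T 2 + T (-2)) * symmT K (n - 2) - symmT K (n - 4) := by
  simp only [symmT, add_mul, mul_add, ← LaurentPolynomial.T_add]
  ring_nf

end LaurentSums

namespace IsQ

variable {Q : ℤ → R[X]}

theorem apply_zero (hQ : IsQ Q) : Q 0 = 1 := by
  simpa [hQ.1, hQ.2.1] using hQ.2.2 0 le_rfl

theorem apply_one (hQ : IsQ Q) : Q 1 = X := by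
  simpa [hQ.apply_zero, hQ.2.1] using hQ.2.2 1 zero_le_one

theorem reducedRelator_of_even (hQ : IsQ Q) {n : ℤ} (hn : 0 ≤ n) (heven : Even n) :
    reducedRelator (T 2 + T (-2)) (symmT ℤ) Q n =
      C (symmT ℤ n) * (Q n - 1) -
        C (2 * (T 1 + T (-1)) * ∑ k ∈ Finset.Icc (1 : ℤ) (n / 2), T (n + 2 - 4 * k)) := by
  obtain ⟨m, rfl⟩ : ∃ m : ℕ, n = 2 * m := ⟨(n / 2).toNat, by grind⟩
  have hexp (k : ℤ) : 2 * (m : ℤ) + 2 - 4 * k = 2 * (m + 1 - 2 * k) := by ring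
  have hdiv : 2 * (m : ℤ) / 2 = m := by lia
  have hmod : 2 * (m : ℤ) % 2 = 0 := by lia
  have hcoeff : symmT ℤ (-2) = T 1 + T (-1) := by simp [symmT, add_comm]
  simp only [hexp, hdiv, hmod, sum_Icc_T_eq_chebyshev_S, reducedRelator, smul_eq_C_mul, zero_sub,
    hcoeff, hQ.apply_zero, hQ.1, C_mul, map_ofNat]
  ring

theorem reducedRelator_of_odd (hQ : IsQ Q) {n : ℤ} (hn : 0 ≤ n) (hodd : Odd n) :
    reducedRelator (T 2 + T (-2)) (symmT ℤ) Q n =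
      C (symmT ℤ n) * (Q n - X) -
        C (2 * ∑ k ∈ Finset.Icc (1 : ℤ) ((n - 1) / 2), T (n + 1 - 4 * k)) * X := by
  obtain ⟨m, rfl⟩ : ∃ m : ℕ, n = 2 * m + 1 := ⟨(n / 2).toNat, by grind⟩
  have hexp (k : ℤ) : 2 * (m : ℤ) + 1 + 1 - 4 * k = 2 * (m + 1 - 2 * k) := by ring
  have hdiv : (2 * (m : ℤ) + 1) / 2 = m := by lia
  have hmod : (2 * (m : ℤ) + 1) % 2 = 1 := by lia
  have hsub : (1 : ℤ) - 2 = -1 := by rfl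
  have hcoeff : symmT ℤ (-1) = 2 := by simp [symmT, one_add_one_eq_two]
  simp only [hexp, hdiv, hmod, add_sub_cancel_right, Int.mul_ediv_cancel_left _ two_ne_zero,
    sum_Icc_T_eq_chebyshev_S, reducedRelator, smul_eq_C_mul, hsub, hcoeff, hQ.apply_one, hQ.2.1,
    C_mul, map_ofNat]
  ring

end IsQ

theorem stmt_4 (Q : ℤ → R[X]) (hQ : IsQ Q)
    (r' : ℤ → R[X])
    (hr' : ∀ k : ℤ, 2 ≤ k → r' k =
      C (T (k + 1) + T (-k - 1)) * (Q k - Q (k - 2)) -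
        C (T (k - 3) + T (-k + 3)) * (Q (k - 2) - Q (k - 4)))
    (g : ℤ → R[X])
    (hgeven : ∀ n : ℤ, 2 ≤ n → Even n → g n =
      C (T (n + 1) + T (-n - 1)) * (Q n - 1) -
        C (2 * (T 1 + T (-1)) * ∑ k ∈ Finset.Icc (1 : ℤ) (n / 2), T (n + 2 - 4 * k)))
    (hgodd : ∀ n : ℤ, 2 ≤ n → ¬ Even n → g n =
      C (T (n + 1) + T (-n - 1)) * (Q n - X) -
        C (2 * ∑ k ∈ Finset.Icc (1 : ℤ) ((n - 1) / 2), T (n + 1 - 4 * k)) * X) :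
    Submodule.span R (r' '' {n : ℤ | 2 ≤ n}) = Submodule.span R (g '' {n : ℤ | 2 ≤ n}) := by
  have hrelator : Set.EqOn r' (relator (symmT ℤ) Q) {n | 2 ≤ n} := by
    intro n hn
    rw [hr' n hn, relator, symmT, symmT, smul_eq_C_mul, smul_eq_C_mul]
    ring_nf
  have hreduced : Set.EqOn g (reducedRelator (T 2 + T (-2)) (symmT ℤ) Q) {n | 2 ≤ n} := by
    intro n (hn : 2 ≤ n)
    by_cases heven : Even n
    · rw [hgeven n hn heven, hQ.reducedRelator_of_even (by lia) heven, symmT]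
    · rw [hgodd n hn heven, hQ.reducedRelator_of_odd (by lia) (Int.not_even_iff_odd.1 heven),
        symmT]
  rw [hrelator.image_eq, hreduced.image_eq, stmt_4_general fun n _ => symmT_eq_mul_sub n]
end
end

section
/- The R-module R ⊕ R ⊕ (R[t]/S) is not isomorphic to a direct sum of cyclic R-modules: there is no index set J and no family of ideals (I_j)_{j∈J} of R such that R ⊕ R ⊕ (R[t]/S) is isomorphic as an R-module to the direct sum ⊕_{j∈J} R/I_j. -/
open Polynomial
open LaurentPolynomial (T)

noncomputable section

/-!
In a submodule of a direct sum of cyclic modules over a domain, an element killed by every linear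
functional is torsion. The class of `1` in `R[t]/S` violates this. It is not torsion, because the
generators of `S` have distinct positive degrees. A functional takes it to some `x`, and the
relation `g (2 * m)`, multiplied by `T 1 - T (-1)` to make its sum telescope, shows that
`T (2 * m + 1) + T (-(2 * m + 1))` divides `2 * (T 1 + T (-1)) * x`; this happens for every
`m ≥ 1`, which forces `x = 0`.
-/

open scoped DirectSum LaurentPolynomial

section CyclicSums

variable {A : Type*} [CommRing A] [IsDomain A]

lemma mem_torsion_quotient_of_forall_dual_eq_zero (I : Ideal A) {z : A ⧸ I}
    (hz : ∀ φ : Module.Dual A (A ⧸ I), φ z = 0) : z ∈ Submodule.torsion A (A ⧸ I) := by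
  by_cases hI : I = ⊥
  · have hz0 : z = 0 := by simpa using hz (I.quotEquivOfEqBot hI).toLinearMap
    exact hz0 ▸ zero_mem _
  · obtain ⟨a, haI, ha⟩ := Submodule.exists_mem_ne_zero_of_ne_bot hI
    refine (Submodule.mem_torsion_iff z).2 ⟨⟨a, mem_nonZeroDivisors_of_ne_zero ha⟩, ?_⟩
    obtain ⟨b, rfl⟩ := Ideal.Quotient.mk_surjective z
    exact Ideal.Quotient.eq_zero_iff_mem.2 (I.mul_mem_right b haI)

lemma mem_torsion_directSum_of_forall_dual_eq_zero {J : Type*} (I : J → Ideal A)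
    {z : ⨁ j, A ⧸ I j} (hz : ∀ φ : Module.Dual A (⨁ j, A ⧸ I j), φ z = 0) :
    z ∈ Submodule.torsion A (⨁ j, A ⧸ I j) := by
  classical
  rw [← DirectSum.sum_support_of z]
  refine sum_mem fun j _ ↦ ?_
  have hzj : z j ∈ Submodule.torsion A (A ⧸ I j) :=
    mem_torsion_quotient_of_forall_dual_eq_zero (I j) fun φ ↦
      hz (φ ∘ₗ DirectSum.component A J (fun j ↦ A ⧸ I j) j)
  obtain ⟨a, ha⟩ := (Submodule.mem_torsion_iff _).1 hzj
  refine (Submodule.mem_torsion_iff _).2 ⟨a, ?_⟩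
  rw [← DirectSum.lof_eq_of A, ← LinearMap.map_smul_of_tower, ha, map_zero]

lemma mem_torsion_of_injective_to_directSum {M : Type*} [AddCommGroup M] [Module A M] {J : Type*}
    {I : J → Ideal A} {f : M →ₗ[A] ⨁ j, A ⧸ I j} (hf : Function.Injective f) {x : M}
    (hx : ∀ φ : Module.Dual A M, φ x = 0) : x ∈ Submodule.torsion A M := by
  obtain ⟨a, ha⟩ := (Submodule.mem_torsion_iff _).1 <|
    mem_torsion_directSum_of_forall_dual_eq_zero I fun φ ↦ hx (φ ∘ₗ f)
  refine (Submodule.mem_torsion_iff x).2 ⟨a, hf ?_⟩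
  rw [LinearMap.map_smul_of_tower, ha, map_zero]

end CyclicSums

section Degrees

lemma exists_natDegree_eq_of_mem_span {A ι : Type*} [Semiring A] [NoZeroDivisors A]
    {g : ι → A[X]} {s : Set ι} (hg : s.InjOn (natDegree ∘ g)) {p : A[X]}
    (hp : p ∈ Submodule.span A (g '' s)) (hp0 : p ≠ 0) :
    ∃ i ∈ s, (g i).natDegree = p.natDegree := by
  obtain ⟨l, hls, rfl⟩ := (Finsupp.mem_span_image_iff_linearCombination A).1 hp
  rw [Finsupp.linearCombination_apply, Finsupp.sum] at hp0 ⊢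
  have hdeg : ∀ i ∈ l.support, (l i • g i).natDegree = (g i).natDegree := fun i hi ↦ by
    rw [smul_eq_C_mul, natDegree_C_mul (Finsupp.mem_support_iff.1 hi)]
  have hsum := natDegree_sum_eq_of_disjoint (fun i ↦ l i • g i) l.support <| by
    rintro i ⟨hi, -⟩ j ⟨hj, -⟩ hij heq
    simp only [Function.comp_apply, hdeg i hi, hdeg j hj] at heq
    exact hij (hg (hls hi) (hls hj) heq)
  obtain ⟨i, hi, hsup⟩ := l.support.exists_mem_eq_sup
    (Finset.nonempty_of_sum_ne_zero hp0) fun i ↦ (l i • g i).natDegree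
  exact ⟨i, hls hi, by rw [hsum, hsup, hdeg i hi]⟩

lemma mkQ_one_notMem_torsion_of_injOn_natDegree {A ι : Type*} [CommRing A] [IsDomain A]
    {g : ι → A[X]} {s : Set ι} (hg : s.InjOn (natDegree ∘ g))
    (hg_pos : ∀ i ∈ s, 0 < (g i).natDegree) :
    (Submodule.span A (g '' s)).mkQ 1 ∉ Submodule.torsion A (A[X] ⧸ Submodule.span A (g '' s)) := by
  intro h
  obtain ⟨⟨a, ha⟩, h_smul⟩ := (Submodule.mem_torsion_iff _).1 h
  have ha_mem : C a ∈ Submodule.span A (g '' s) := by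
    rw [← mul_one (C a), ← smul_eq_C_mul]
    exact (Submodule.Quotient.mk_eq_zero _).1 h_smul
  obtain ⟨i, hi, hdeg⟩ :=
    exists_natDegree_eq_of_mem_span hg ha_mem (C_ne_zero.2 (nonZeroDivisors.ne_zero ha))
  exact (hg_pos i hi).ne' (hdeg.trans (natDegree_C a))

lemma natDegree_C_mul_sub_sub {A : Type*} [Ring A] [NoZeroDivisors A] {a : A} (ha : a ≠ 0)
    {p q r : A[X]} (hq : q.natDegree < p.natDegree) (hr : r.natDegree < p.natDegree) :
    (C a * (p - q) - r).natDegree = p.natDegree := by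
  have hpq : (C a * (p - q)).natDegree = p.natDegree := by
    rw [natDegree_C_mul ha, natDegree_sub_eq_left_of_natDegree_lt hq]
  rw [natDegree_sub_eq_left_of_natDegree_lt (hpq ▸ hr), hpq]

lemma IsQ.degree_eq {Q : ℤ → R[X]} (hQ : IsQ Q) (n : ℕ) : (Q n).degree = n := by
  obtain ⟨h_neg_two, h_neg_one, h_rec⟩ := hQ
  have h_zero : Q 0 = 1 := by simp [h_rec 0 le_rfl, h_neg_two, h_neg_one]
  induction n using Nat.twoStepInduction with
  | zero => simp [h_zero]
  | one => simp [h_rec 1 zero_le_one, h_zero, h_neg_one]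
  | more n ih ih' =>
    have h_next : Q (n + 2 : ℕ) = X * Q (n + 1 : ℕ) - Q n := by
      rw [h_rec _ (by positivity)]
      congr 3 <;> push_cast <;> ring
    have h_lead : (X * Q (n + 1 : ℕ)).degree = ((n + 2 : ℕ) : WithBot ℕ) := by
      rw [X_mul, degree_mul_X, ih']
      norm_cast
    have h_lt : (Q n).degree < (X * Q (n + 1 : ℕ)).degree := by
      rw [h_lead, ih]
      exact_mod_cast Nat.lt_add_of_pos_right two_pos
    rw [h_next, degree_sub_eq_left_of_degree_lt h_lt, h_lead]

lemma IsQ.natDegree_eq {Q : ℤ → R[X]} (hQ : IsQ Q) {n : ℤ} (hn : 0 ≤ n) :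
    ((Q n).natDegree : ℤ) = n := by
  lift n to ℕ using hn
  rw [natDegree_eq_of_degree_eq_some (hQ.degree_eq n)]

end Degrees

section Laurent

variable {K : Type*} [CommRing K]

lemma dvd_of_toLaurent_dvd_toLaurent {p q : K[X]} (hq : IsCoprime q X)
    (h : toLaurent q ∣ toLaurent p) : q ∣ p := by
  obtain ⟨y, hy⟩ := h
  obtain ⟨j, y', hy'⟩ := y.exists_T_pow
  have hpoly : q * y' = p * X ^ j := by
    apply toLaurent_injective
    rw [map_mul, map_mul, hy', hy, toLaurent_X_pow, mul_assoc]
  exact hq.pow_right.dvd_of_dvd_mul_right ⟨y', hpoly.symm⟩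

lemma eq_zero_of_T_add_T_neg_dvd_toLaurent {p : K[X]} {n : ℕ} (hn : p.natDegree < 2 * n)
    (h : (T n + T (-n) : K[T;T⁻¹]) ∣ toLaurent p) : p = 0 := by
  nontriviality K
  have hmul : toLaurent (X ^ (2 * n) + 1 : K[X]) = (T n + T (-n)) * T n := by
    rw [map_add, toLaurent_X_pow, toLaurent_one, add_mul, ← LaurentPolynomial.T_add,
      ← LaurentPolynomial.T_add, neg_add_cancel, LaurentPolynomial.T_zero]
    congr 2
    push_cast
    ring
  have hcoprime : IsCoprime (X ^ (2 * n) + 1 : K[X]) X := by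
    obtain ⟨k, hk⟩ := Nat.exists_eq_add_one_of_ne_zero (show 2 * n ≠ 0 by omega)
    exact ⟨1, -X ^ k, by rw [hk]; ring⟩
  have hdvd : (X ^ (2 * n) + 1 : K[X]) ∣ p := by
    refine dvd_of_toLaurent_dvd_toLaurent hcoprime ?_
    rwa [hmul, (LaurentPolynomial.isUnit_T _).mul_right_dvd]
  by_contra hp
  refine (monic_X_pow_add_C (1 : K) (show 2 * n ≠ 0 by omega)).not_dvd_of_natDegree_lt hp ?_ ?_
  · rwa [natDegree_X_pow_add_C]
  · rwa [C_1]

lemma eq_zero_of_frequently_T_add_T_neg_dvd {x : K[T;T⁻¹]}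
    (h : ∃ᶠ n : ℕ in Filter.atTop, (T n + T (-n) : K[T;T⁻¹]) ∣ x) : x = 0 := by
  obtain ⟨k, p, hp⟩ := x.exists_T_pow
  obtain ⟨n, hn, hdvd⟩ := Filter.frequently_atTop.1 h (p.natDegree + 1)
  have hp0 : p = 0 :=
    eq_zero_of_T_add_T_neg_dvd_toLaurent (by omega) (hp ▸ hdvd.mul_right (T k))
  rwa [hp0, map_zero, eq_comm, (LaurentPolynomial.isUnit_T _).mul_left_eq_zero] at hp

lemma T_two_sub_T_neg_two_mul_sum (m : ℕ) (n : ℤ) :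
    (T 2 - T (-2) : K[T;T⁻¹]) * ∑ k ∈ Finset.Icc (1 : ℤ) m, T (n + 2 - 4 * k) =
      T n - T (n - 4 * m) := by
  induction m with
  | zero => simp
  | succ m ih =>
    push_cast
    rw [← Finset.insert_Icc_right_eq_Icc_add_one (by omega), Finset.sum_insert (by simp), mul_add,
      ih, sub_mul, ← LaurentPolynomial.T_add, ← LaurentPolynomial.T_add]
    ring_nf

lemma T_add_T_neg_dvd_of_dvd_sum_mul {m : ℕ} {x : K[T;T⁻¹]}
    (h : T (2 * m + 1) + T (-(2 * m + 1)) ∣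
      2 * (T 1 + T (-1)) * (∑ k ∈ Finset.Icc (1 : ℤ) m, T (2 * m + 2 - 4 * k)) * x) :
    T (2 * m + 1) + T (-(2 * m + 1)) ∣ 2 * (T 1 + T (-1)) * x := by
  have h_sq : (T 1 - T (-1) : K[T;T⁻¹]) * (T 1 + T (-1)) = T 2 - T (-2) := by
    simp only [mul_add, sub_mul, ← LaurentPolynomial.T_add]
    ring_nf
  have h_tel := T_two_sub_T_neg_two_mul_sum (K := K) m (2 * m)
  rw [show (2 * m - 4 * m : ℤ) = -(2 * m) by ring] at h_tel
  have h_mod : (T (2 * m) - T (-(2 * m)) : K[T;T⁻¹]) =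
      T (2 * m + 1) * (T 1 + T (-1)) - T 1 * (T (2 * m + 1) + T (-(2 * m + 1))) := by
    simp only [mul_add, ← LaurentPolynomial.T_add]
    ring_nf
  have key : T (2 * m + 1) * (2 * (T 1 + T (-1)) * x) =
      (T 1 - T (-1)) *
          (2 * (T 1 + T (-1)) * (∑ k ∈ Finset.Icc (1 : ℤ) m, T (2 * m + 2 - 4 * k)) * x) +
        (T (2 * m + 1) + T (-(2 * m + 1))) * (2 * T 1 * x) := by
    linear_combination (-2 * x) * h_mod - 2 * x * h_tel -
      2 * x * (∑ k ∈ Finset.Icc (1 : ℤ) m, T (2 * m + 2 - 4 * k)) * h_sq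
  rw [← (LaurentPolynomial.isUnit_T (2 * m + 1)).dvd_mul_left, key]
  exact (h.mul_left _).add (dvd_mul_right _ _)

lemma T_add_T_neg_ne_zero [NeZero (2 : K)] (n : ℤ) : (T n + T (-n) : K[T;T⁻¹]) ≠ 0 := by
  have h_eval : LaurentPolynomial.eval₂ (RingHom.id K) 1 (T n + T (-n)) = 2 := by
    simp [one_add_one_eq_two]
  intro h
  exact two_ne_zero (h_eval.symm.trans (by rw [h, map_zero]))

lemma apply_one_eq_zero_of_even_relations [IsDomain K] [NeZero (2 : K)]
    (F : Module.Dual K[T;T⁻¹] K[T;T⁻¹][X]) (q : ℕ → K[T;T⁻¹][X])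
    (hF : ∀ m : ℕ, 1 ≤ m → F (C (T (2 * m + 1) + T (-(2 * m + 1))) * q m -
      C (2 * (T 1 + T (-1)) * ∑ k ∈ Finset.Icc (1 : ℤ) m, T (2 * m + 2 - 4 * k))) = 0) :
    F 1 = 0 := by
  have h_two : (2 : K[T;T⁻¹]) ≠ 0 := by
    simpa [one_add_one_eq_two] using T_add_T_neg_ne_zero (K := K) 0
  have h_dvd (m : ℕ) (hm : 1 ≤ m) :
      (T (2 * m + 1) + T (-(2 * m + 1)) : K[T;T⁻¹]) ∣ 2 * (T 1 + T (-1)) * F 1 := by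
    refine T_add_T_neg_dvd_of_dvd_sum_mul ⟨F (q m), ?_⟩
    have h := hF m hm
    rw [← mul_one (C (_ * Finset.sum _ _)), ← smul_eq_C_mul, ← smul_eq_C_mul, map_sub, map_smul,
      map_smul, smul_eq_mul, smul_eq_mul, sub_eq_zero] at h
    exact h.symm
  have h_zero : 2 * (T 1 + T (-1)) * F 1 = 0 := by
    refine eq_zero_of_frequently_T_add_T_neg_dvd (Filter.frequently_atTop.2 fun N ↦ ?_)
    exact ⟨2 * (N + 1) + 1, by omega, by exact_mod_cast h_dvd (N + 1) (by omega)⟩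
  exact (mul_eq_zero.1 h_zero).resolve_left (mul_ne_zero h_two (T_add_T_neg_ne_zero 1))

end Laurent

theorem stmt_9_general {K : Type*} [CommRing K] [IsDomain K] [NeZero (2 : K)]
    (Q : ℤ → K[T;T⁻¹][X]) (hQ : ∀ n : ℤ, 2 ≤ n → ((Q n).natDegree : ℤ) = n)
    (g : ℤ → K[T;T⁻¹][X])
    (hgeven : ∀ n : ℤ, 2 ≤ n → Even n → g n =
      C (T (n + 1) + T (-n - 1)) * (Q n - 1) -
        C (2 * (T 1 + T (-1)) * ∑ k ∈ Finset.Icc (1 : ℤ) (n / 2), T (n + 2 - 4 * k)))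
    (hgodd : ∀ n : ℤ, 2 ≤ n → ¬ Even n → g n =
      C (T (n + 1) + T (-n - 1)) * (Q n - X) -
        C (2 * ∑ k ∈ Finset.Icc (1 : ℤ) ((n - 1) / 2), T (n + 1 - 4 * k)) * X)
    (S : Submodule K[T;T⁻¹] K[T;T⁻¹][X]) (hS : S = Submodule.span _ (g '' {n : ℤ | 2 ≤ n}))
    {J : Type*} (I : J → Ideal K[T;T⁻¹])
    (f : (K[T;T⁻¹][X] ⧸ S) →ₗ[K[T;T⁻¹]] ⨁ j, K[T;T⁻¹] ⧸ I j) : ¬ Function.Injective f := by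
  intro hf
  subst hS
  have hg_deg (n : ℤ) (hn : 2 ≤ n) : ((g n).natDegree : ℤ) = n := by
    have hQn := hQ n hn
    have ha : (T (n + 1) + T (-n - 1) : K[T;T⁻¹]) ≠ 0 := neg_add' n 1 ▸ T_add_T_neg_ne_zero _
    by_cases hn_even : Even n
    · rwa [hgeven n hn hn_even, natDegree_C_mul_sub_sub ha] <;>
        simp only [natDegree_one, natDegree_C] <;> omega
    · rwa [hgodd n hn hn_even, natDegree_C_mul_sub_sub ha]
      · rw [natDegree_X]
        omega
      · exact (natDegree_C_mul_le _ _).trans_lt (by rw [natDegree_X]; omega)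
  have hg_inj : {n : ℤ | 2 ≤ n}.InjOn (natDegree ∘ g) := fun m hm n hn hmn ↦ by
    rw [← hg_deg m hm, ← hg_deg n hn]
    exact congrArg Nat.cast hmn
  have hg_pos (n : ℤ) (hn : 2 ≤ n) : 0 < (g n).natDegree := by
    have := hg_deg n hn
    omega
  refine mkQ_one_notMem_torsion_of_injOn_natDegree hg_inj hg_pos
    (mem_torsion_of_injective_to_directSum hf fun φ ↦ ?_)
  refine apply_one_eq_zero_of_even_relations (φ ∘ₗ Submodule.mkQ _) (fun m ↦ Q (2 * m) - 1)
    fun m hm ↦ ?_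
  have h_mem : g (2 * m) ∈ Submodule.span K[T;T⁻¹] (g '' {n : ℤ | 2 ≤ n}) :=
    Submodule.subset_span ⟨2 * m, show (2 : ℤ) ≤ 2 * m by omega, rfl⟩
  rw [hgeven _ (by omega) (even_two_mul _), Int.mul_ediv_cancel_left _ two_ne_zero,
    ← neg_add'] at h_mem
  rw [LinearMap.comp_apply, Submodule.mkQ_apply, (Submodule.Quotient.mk_eq_zero _).2 h_mem,
    map_zero]

theorem stmt_9 (Q : ℤ → R[X]) (hQ : IsQ Q)
    (g : ℤ → R[X])
    (hgeven : ∀ n : ℤ, 2 ≤ n → Even n → g n =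
      C (T (n + 1) + T (-n - 1)) * (Q n - 1) -
        C (2 * (T 1 + T (-1)) * ∑ k ∈ Finset.Icc (1 : ℤ) (n / 2), T (n + 2 - 4 * k)))
    (hgodd : ∀ n : ℤ, 2 ≤ n → ¬ Even n → g n =
      C (T (n + 1) + T (-n - 1)) * (Q n - X) -
        C (2 * ∑ k ∈ Finset.Icc (1 : ℤ) ((n - 1) / 2), T (n + 1 - 4 * k)) * X)
    (S : Submodule R R[X]) (hS : S = Submodule.span R (g '' {n : ℤ | 2 ≤ n})) :
    ¬ ∃ (J : Type) (I : J → Ideal R),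
      Nonempty ((R × R × (R[X] ⧸ S)) ≃ₗ[R] DirectSum J fun j => R ⧸ I j) := by
  rintro ⟨J, I, ⟨φ⟩⟩
  exact stmt_9_general Q (fun n hn ↦ hQ.natDegree_eq (by omega)) g hgeven hgodd S hS I
    (φ.toLinearMap ∘ₗ LinearMap.inr R R _ ∘ₗ LinearMap.inr R R _)
    (φ.injective.comp (LinearMap.inr_injective.comp LinearMap.inr_injective))
end
end

section
/- The quotient R-module R[t]/S has no 2-torsion: for every element m of R[t]/S, if 2·m = 0 then m = 0. -/
open Polynomial
open LaurentPolynomial (T)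

noncomputable section

/-!
Modulo a non-zero-divisor `r` of the base ring `k`, the polynomial `g n` still has degree `n`, and
its leading coefficient `T (n + 1) + T (-n - 1)` is not a zero divisor. Hence, if `r` divides a
linear combination of the `g n`, comparing top coefficients shows that it divides each coefficient
of the combination, and it can be cancelled. So the quotient is torsion-free over any `k`.
-/

section LeadingCoefficients

variable {A ι : Type*} [CommRing A] {r : A} {p : ι → A[X]} {d : ι → ℕ}

lemma dvd_of_C_dvd_sum_smul {s : Finset ι} (hd : Set.InjOn d s)
    (hdeg : ∀ i ∈ s, (p i).natDegree ≤ d i)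
    (hlead : ∀ i ∈ s, ∀ a, r ∣ a * (p i).coeff (d i) → r ∣ a)
    {c : ι → A} (hc : C r ∣ ∑ i ∈ s, c i • p i) : ∀ i ∈ s, r ∣ c i := by
  classical
  induction s using Finset.induction_on_max_value d with
  | empty => simp
  | insert j s hj hmax ih =>
    have hlt : ∀ i ∈ s, (p i).natDegree < d j := fun i hi ↦ by
      have hij : d i ≠ d j := fun h ↦ hj <|
        hd (Finset.mem_insert_of_mem hi) (Finset.mem_insert_self j s) h ▸ hi
      exact (hdeg i (Finset.mem_insert_of_mem hi)).trans_lt ((hmax i hi).lt_of_ne hij)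
    rw [Finset.sum_insert hj] at hc
    have htop : (∑ i ∈ s, c i • p i).coeff (d j) = 0 := by
      rw [finsetSum_coeff]
      refine Finset.sum_eq_zero fun i hi ↦ ?_
      rw [coeff_smul, coeff_eq_zero_of_natDegree_lt (hlt i hi), smul_zero]
    have hcj : r ∣ c j := by
      have h := (C_dvd_iff_dvd_coeff r _).1 hc (d j)
      rw [coeff_add, htop, add_zero, coeff_smul, smul_eq_mul] at h
      exact hlead j (Finset.mem_insert_self j s) _ h
    have hrest : C r ∣ ∑ i ∈ s, c i • p i := by
      rw [smul_eq_C_mul] at hc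
      exact (dvd_add_right ((map_dvd C hcj).mul_right _)).1 hc
    rw [Finset.coe_insert] at hd
    rw [Finset.forall_mem_insert]
    exact ⟨hcj, ih (hd.mono (Set.subset_insert _ _))
      (fun i hi ↦ hdeg i (Finset.mem_insert_of_mem hi))
      (fun i hi ↦ hlead i (Finset.mem_insert_of_mem hi)) hrest⟩

theorem isSMulRegular_quotient_span_image {s : Set ι} (hr : IsSMulRegular A r)
    (hd : Set.InjOn d s) (hdeg : ∀ i ∈ s, (p i).natDegree ≤ d i)
    (hlead : ∀ i ∈ s, ∀ a, r ∣ a * (p i).coeff (d i) → r ∣ a) :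
    IsSMulRegular (A[X] ⧸ Submodule.span A (p '' s)) r := by
  rw [isSMulRegular_quotient_iff_mem_of_smul_mem]
  intro f hf
  obtain ⟨c, hcs, hsum⟩ := (Finsupp.mem_span_image_iff_linearCombination A).1 hf
  rw [Finsupp.mem_supported] at hcs
  rw [Finsupp.linearCombination_apply, Finsupp.sum] at hsum
  have hdvd : ∀ i ∈ c.support, r ∣ c i := by
    refine dvd_of_C_dvd_sum_smul (hd.mono hcs) (fun i hi ↦ hdeg i (hcs hi))
      (fun i hi ↦ hlead i (hcs hi)) ?_
    rw [hsum, smul_eq_C_mul]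
    exact dvd_mul_right _ _
  choose! b hb using hdvd
  have hf_eq : f = ∑ i ∈ c.support, b i • p i := by
    refine hr.polynomial ?_
    simp only [← hsum, Finset.smul_sum, smul_smul]
    exact Finset.sum_congr rfl fun i hi ↦ by rw [← hb i hi]
  rw [hf_eq]
  exact Submodule.sum_mem _ fun i hi ↦
    Submodule.smul_mem _ _ (Submodule.subset_span (Set.mem_image_of_mem p (hcs hi)))

end LeadingCoefficients

section Laurent

open scoped LaurentPolynomial

lemma algebraMap_dvd_iff_dvd_coeff {k G : Type*} [CommSemiring k] [AddCommMonoid G] {r : k}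
    {f : AddMonoidAlgebra k G} :
    algebraMap k (AddMonoidAlgebra k G) r ∣ f ↔ ∀ n, r ∣ f.coeff n := by
  constructor
  · rintro ⟨q, rfl⟩ n
    rw [← Algebra.smul_def]
    exact dvd_mul_right _ _
  · intro h
    rw [← AddMonoidAlgebra.sum_coeff_single f]
    refine Finset.dvd_sum fun n _ ↦ ?_
    obtain ⟨b, hb⟩ := h n
    refine ⟨.single n b, ?_⟩
    rw [hb, ← Algebra.smul_def, AddMonoidAlgebra.smul_single, smul_eq_mul]

lemma coeff_mul_T {k : Type*} [Semiring k] (f : k[T;T⁻¹]) (m n : ℤ) :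
    (f * T m).coeff n = f.coeff (n - m) := by
  rw [T, AddMonoidAlgebra.coeff_mul_single_eq_coeff_mul (n - m) (by intros; omega), mul_one]

-- At the last exponent `i` where `r` does not divide the coefficient of `a`, the coefficient of
-- the product at `i + m` is that of `a` at `i` plus a later one.
lemma algebraMap_dvd_of_dvd_mul_T_add_T {k : Type*} [CommRing k] {r : k} {a : k[T;T⁻¹]} {m n : ℤ}
    (hmn : n < m) (h : algebraMap k k[T;T⁻¹] r ∣ a * (T m + T n)) :
    algebraMap k k[T;T⁻¹] r ∣ a := by
  classical
  rw [algebraMap_dvd_iff_dvd_coeff] at h ⊢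
  by_contra! ⟨j, hj⟩
  have hmem {i : ℤ} (hi : ¬ r ∣ a.coeff i) : i ∈ {x ∈ a.coeff.support | ¬ r ∣ a.coeff x} :=
    Finset.mem_filter.2 ⟨Finsupp.mem_support_iff.2 fun h₀ ↦ hi (h₀ ▸ dvd_zero r), hi⟩
  obtain ⟨i, hi, hmax⟩ := Finset.exists_max_image _ id ⟨j, hmem hj⟩
  have hgt : r ∣ a.coeff (i + (m - n)) := by
    by_contra hndvd
    have hle : i + (m - n) ≤ i := hmax _ (hmem hndvd)
    omega
  have hsum : r ∣ a.coeff i + a.coeff (i + (m - n)) := by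
    simpa only [mul_add, AddMonoidAlgebra.coeff_add, Finsupp.add_apply, coeff_mul_T,
      add_sub_cancel_right, add_sub_assoc] using h (i + m)
  exact (Finset.mem_filter.1 hi).2 ((dvd_add_left hgt).1 hsum)

end Laurent

section Chebyshev

variable (A : Type*) [CommRing A]

lemma isMonicOfDegree_chebyshev_S_natCast [Nontrivial A] (n : ℕ) :
    IsMonicOfDegree (Chebyshev.S A n) n := by
  induction n using Nat.twoStepInduction with
  | zero => simp [isMonicOfDegree_zero_iff]
  | one => simpa using isMonicOfDegree_X A
  | more n ih₀ ih₁ =>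
    push_cast at ih₁ ⊢
    rw [Chebyshev.S_add_two, show n + 2 = 1 + (n + 1) by ring]
    exact ((isMonicOfDegree_X A).mul ih₁).sub (by rw [ih₀.natDegree_eq]; omega)

variable {A}

lemma eq_chebyshev_S_of_recurrence {Q : ℤ → A[X]} (hQ₂ : Q (-2) = -1) (hQ₁ : Q (-1) = 0)
    (hQ : ∀ n : ℤ, 0 ≤ n → Q n = X * Q (n - 1) - Q (n - 2)) (n : ℕ) :
    Q n = Chebyshev.S A n := by
  have hQ_zero : Q 0 = 1 := by simp [hQ 0 le_rfl, hQ₂, hQ₁]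
  have hQ_one : Q 1 = X := by simp [hQ 1 zero_le_one, hQ_zero, hQ₁]
  induction n using Nat.twoStepInduction with
  | zero => simpa using hQ_zero
  | one => simpa using hQ_one
  | more n ih₀ ih₁ =>
    rw [hQ _ (by positivity), Chebyshev.S_eq]
    push_cast at ih₁ ⊢
    rw [show (n : ℤ) + 2 - 1 = n + 1 by ring, add_sub_cancel_right, ih₀, ih₁]

lemma isMonicOfDegree_of_recurrence [Nontrivial A] {Q : ℤ → A[X]} (hQ₂ : Q (-2) = -1)
    (hQ₁ : Q (-1) = 0) (hQ : ∀ n : ℤ, 0 ≤ n → Q n = X * Q (n - 1) - Q (n - 2)) {n : ℤ}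
    (hn : 0 ≤ n) : IsMonicOfDegree (Q n) n.toNat := by
  lift n to ℕ using hn
  rw [eq_chebyshev_S_of_recurrence hQ₂ hQ₁ hQ]
  exact isMonicOfDegree_chebyshev_S_natCast A n

end Chebyshev

section TorsionFree

open scoped LaurentPolynomial

variable {k : Type*} [CommRing k]

theorem isTorsionFree_quotient_span_image {ι : Type*} {s : Set ι}
    {p : ι → k[T;T⁻¹][X]} {d : ι → ℕ} {m n : ι → ℤ} (hd : Set.InjOn d s)
    (hmn : ∀ i ∈ s, n i < m i) (hdeg : ∀ i ∈ s, (p i).natDegree ≤ d i)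
    (hlead : ∀ i ∈ s, (p i).coeff (d i) = T (m i) + T (n i)) :
    Module.IsTorsionFree k (k[T;T⁻¹][X] ⧸ Submodule.span k[T;T⁻¹] (p '' s)) where
  isSMulRegular r hr := by
    rw [← isSMulRegular_algebraMap_iff (A := k[T;T⁻¹])]
    refine isSMulRegular_quotient_span_image ?_ hd hdeg fun i hi a h ↦ ?_
    · rw [isSMulRegular_algebraMap_iff]
      exact hr.isSMulRegular
    · rw [hlead i hi] at h
      exact algebraMap_dvd_of_dvd_mul_T_add_T (hmn i hi) h

lemma coeff_C_mul_sub_of_isMonicOfDegree {A : Type*} [Ring A] {q v : A[X]} {n : ℕ} (c : A)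
    (hq : IsMonicOfDegree q n) (hv : v.natDegree < n) : (C c * q - v).coeff n = c := by
  have hlead : q.coeff n = 1 := hq.natDegree_eq ▸ hq.monic.coeff_natDegree
  rw [coeff_sub, coeff_C_mul, hlead, coeff_eq_zero_of_natDegree_lt hv, mul_one, sub_zero]

theorem stmt_11_general (Q : ℤ → k[T;T⁻¹][X]) (hQ₂ : Q (-2) = -1) (hQ₁ : Q (-1) = 0)
    (hQ : ∀ n : ℤ, 0 ≤ n → Q n = X * Q (n - 1) - Q (n - 2)) (g : ℤ → k[T;T⁻¹][X])
    (hgeven : ∀ n : ℤ, 2 ≤ n → Even n → g n =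
      C (T (n + 1) + T (-n - 1)) * (Q n - 1) -
        C (2 * (T 1 + T (-1)) * ∑ j ∈ Finset.Icc (1 : ℤ) (n / 2), T (n + 2 - 4 * j)))
    (hgodd : ∀ n : ℤ, 2 ≤ n → ¬ Even n → g n =
      C (T (n + 1) + T (-n - 1)) * (Q n - X) -
        C (2 * ∑ j ∈ Finset.Icc (1 : ℤ) ((n - 1) / 2), T (n + 1 - 4 * j)) * X) :
    Module.IsTorsionFree k
      (k[T;T⁻¹][X] ⧸ Submodule.span k[T;T⁻¹] (g '' {n : ℤ | 2 ≤ n})) := by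
  cases subsingleton_or_nontrivial k
  · have := Module.subsingleton k
      (k[T;T⁻¹][X] ⧸ Submodule.span k[T;T⁻¹] (g '' {n : ℤ | 2 ≤ n}))
    infer_instance
  have hform (n : ℤ) (hn : 2 ≤ n) : ∃ q v : k[T;T⁻¹][X], IsMonicOfDegree q n.toNat ∧
      v.natDegree < n.toNat ∧ g n = C (T (n + 1) + T (-n - 1)) * q - v := by
    have hQn : IsMonicOfDegree (Q n) n.toNat :=
      isMonicOfDegree_of_recurrence hQ₂ hQ₁ hQ (by omega)
    have hC (c : k[T;T⁻¹]) : (C c).natDegree < n.toNat := by rw [natDegree_C]; omega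
    have hX : (X : k[T;T⁻¹][X]).natDegree < n.toNat := natDegree_X_le.trans_lt (by omega)
    by_cases hpar : Even n
    · exact ⟨_, _, hQn.sub (hC 1), hC _, hgeven n hn hpar⟩
    · exact ⟨_, _, hQn.sub hX, (natDegree_C_mul_le _ _).trans_lt hX, hgodd n hn hpar⟩
  choose! q v hq hv hg using hform
  have htoNat : Set.InjOn Int.toNat {n : ℤ | 2 ≤ n} := fun m (hm : 2 ≤ m) n (hn : 2 ≤ n) h ↦ by
    omega
  refine isTorsionFree_quotient_span_image htoNat (fun n (hn : 2 ≤ n) ↦ (by omega : -n - 1 < n + 1))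
    (fun n hn ↦ ?_) fun n hn ↦ ?_
  · rw [hg n hn, natDegree_sub_le_iff_left (hv n hn).le]
    exact (natDegree_C_mul_le _ _).trans (hq n hn).natDegree_eq.le
  · rw [hg n hn]
    exact coeff_C_mul_sub_of_isMonicOfDegree _ (hq n hn) (hv n hn)

end TorsionFree

theorem stmt_11 (Q : ℤ → R[X]) (hQ : IsQ Q)
    (g : ℤ → R[X])
    (hgeven : ∀ n : ℤ, 2 ≤ n → Even n → g n =
      C (T (n + 1) + T (-n - 1)) * (Q n - 1) -
        C (2 * (T 1 + T (-1)) * ∑ k ∈ Finset.Icc (1 : ℤ) (n / 2), T (n + 2 - 4 * k)))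
    (hgodd : ∀ n : ℤ, 2 ≤ n → ¬ Even n → g n =
      C (T (n + 1) + T (-n - 1)) * (Q n - X) -
        C (2 * ∑ k ∈ Finset.Icc (1 : ℤ) ((n - 1) / 2), T (n + 1 - 4 * k)) * X)
    (S : Submodule R R[X]) (hS : S = Submodule.span R (g '' {n : ℤ | 2 ≤ n})) :
    ∀ m : R[X] ⧸ S, (2 : R) • m = 0 → m = 0 := by
  subst hS
  have htf := stmt_11_general Q hQ.1 hQ.2.1 hQ.2.2 g hgeven hgodd
  exact fun m hm ↦ (IsRegular.of_ne_zero (two_ne_zero (α := ℤ))).isSMulRegular.right_eq_zero_of_smul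
    (by rwa [← algebraMap_smul R, map_ofNat])
end
end

section
/- For every integer n ≥ 1 and every integer i with 1 ≤ i ≤ (n+1)/2, the element (−A^{n+2}+A^{−n−2})·(∑_{k=0}^{i−1} Q_{n−2k}) − q̂_{n,i}·Q_{n−2i} of R[t] lies in the R-submodule of R[t] generated by the elements P_k − P_{−k} for 1 ≤ k ≤ n, where q̂_{n,i} = ∑_{k=1}^{i} (−A^{n−4k+2} + A^{−n+4k−2}). -/
open Polynomial
open LaurentPolynomial (T)

noncomputable section

/-- `P` is the family of polynomials `P n ∈ R[t]` defined by `P 0 = -A^2 - A^-2`,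
`P 1 = -A^3 t` and the recurrence `P n = A t P (n-1) - A^2 P (n-2)` for all `n : ℤ`. -/
def IsP (P : ℤ → R[X]) : Prop :=
  P 0 = C (-T 2 - T (-2)) ∧ P 1 = C (-T 3) * X ∧
    ∀ n : ℤ, P n = C (T 1) * X * P (n - 1) - C (T 2) * P (n - 2)

/-!
Write `α m = -A ^ m + A ^ (-m)`, let `S` be the rescaled Chebyshev polynomials indexed by all of
`ℤ`, which extend `Q`, and let `[i]` be the quantum integer at `A ^ 2`. Comparing two-sided
recurrences gives `P n = A ^ (n - 2) * S (n - 2) - A ^ (n + 2) * S n`, and the symmetry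
`S (-n) = -S (n - 2)` then yields `P n - P (-n) = α (n + 2) * S n - α (n - 2) * S (n - 2)`.

The scalar `q̂ n i` factors as `[i] * α (n - 2 * i)`, and `α (n + 2) + q̂ n j` is
`[j + 1] * α (n - 2 * j + 2)`. Hence `[j + 1] * (P k - P (-k))` with `k = n - 2 * j` equals
`(α (n + 2) + q̂ n j) * S (n - 2 * j) - q̂ n (j + 1) * S (n - 2 * (j + 1))`, and the sum over
`j < i` telescopes to the element of the theorem. All indices satisfy `|k| ≤ n` when `i ≤ n + 1`.
-/

lemma sum_Icc_add_sub_one {M : Type*} [AddCommMonoid M] (f : ℤ → M) (a : ℤ) (i : ℕ) :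
    ∑ k ∈ Finset.Icc a (a + i - 1), f k = ∑ k ∈ Finset.range i, f (a + k) := by
  simp [Int.Icc_eq_finset_map]

lemma sub_neg_mem_span {K M : Type*} [Ring K] [AddCommGroup M] [Module K M] (P : ℤ → M)
    {k n : ℤ} (hk : |k| ≤ n) :
    P k - P (-k) ∈
      Submodule.span K ((fun k : ℤ => P k - P (-k)) '' {k : ℤ | 1 ≤ k ∧ k ≤ n}) := by
  obtain ⟨h_neg, h_le⟩ := abs_le.mp hk
  rcases lt_trichotomy k 0 with h | rfl | h
  · rw [← neg_sub (P (-k))]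
    exact neg_mem (Submodule.subset_span ⟨-k, ⟨by omega, by omega⟩, by simp only [neg_neg]⟩)
  · simp
  · exact Submodule.subset_span ⟨k, ⟨h, h_le⟩, rfl⟩

section Character

-- A character `A : AddChar ℤ K` is the power map `m ↦ a ^ m` of a unit `a` of `K`, so that `A m`
-- stands for the `m`-th power of the variable `A` of the theorem.
variable {K : Type*} [CommRing K]

/-- The coefficient `-A ^ m + A ^ (-m)`, whose shape all scalars in the theorem share. -/
def skewPow (A : AddChar ℤ K) (m : ℤ) : K := -A m + A (-m)

/-- The balanced quantum integer `[i]` at `A ^ 2`, that is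
`A ^ (2 * i - 2) + A ^ (2 * i - 6) + ⋯ + A ^ (2 - 2 * i)`. -/
def quantumInt (A : AddChar ℤ K) (i : ℕ) : K := ∑ k ∈ Finset.range i, A (2 * i - 2 - 4 * k)

lemma quantumInt_zero (A : AddChar ℤ K) : quantumInt A 0 = 0 := Finset.sum_range_zero _

lemma quantumInt_inv (A : AddChar ℤ K) (i : ℕ) : quantumInt A⁻¹ i = quantumInt A i := by
  rw [quantumInt, quantumInt, ← Finset.sum_range_reflect]
  refine Finset.sum_congr rfl fun k hk => ?_
  have hk : k + 1 ≤ i := Finset.mem_range.mp hk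
  rw [AddChar.inv_apply, Nat.sub_sub, add_comm 1 k, Nat.cast_sub hk]
  congr 1
  push_cast
  ring

lemma quantumInt_mul_apply (A : AddChar ℤ K) (i : ℕ) (m : ℤ) :
    quantumInt A i * A m = ∑ k ∈ Finset.range i, A (m + 2 * i - 2 - 4 * k) := by
  rw [quantumInt, Finset.sum_mul]
  refine Finset.sum_congr rfl fun k _ => ?_
  rw [← AddChar.map_add_eq_mul]
  congr 1
  ring

lemma quantumInt_mul_skewPow (A : AddChar ℤ K) (i : ℕ) (m : ℤ) :
    quantumInt A i * skewPow A m = ∑ k ∈ Finset.range i, skewPow A (m + 2 * i - 2 - 4 * k) := by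
  have h_inv : quantumInt A i * A (-m) =
      ∑ k ∈ Finset.range i, A (-(m + 2 * i - 2 - 4 * k)) := by
    simpa only [quantumInt_inv, AddChar.inv_apply] using quantumInt_mul_apply A⁻¹ i m
  simp only [skewPow, mul_add, mul_neg, h_inv, quantumInt_mul_apply A i m,
    Finset.sum_add_distrib, Finset.sum_neg_distrib]

lemma quantumInt_succ_mul_skewPow (A : AddChar ℤ K) (i : ℕ) (m : ℤ) :
    quantumInt A (i + 1) * skewPow A (m + 2) =
      skewPow A (m + 2 * i + 2) + quantumInt A i * skewPow A m := by
  rw [quantumInt_mul_skewPow, quantumInt_mul_skewPow, Finset.sum_range_succ', add_comm]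
  congr 1
  · congr 1
    push_cast
    ring
  · refine Finset.sum_congr rfl fun k _ => ?_
    congr 1
    push_cast
    ring

lemma sum_quantumInt_smul_sub {M : Type*} [AddCommGroup M] [Module K M] (A : AddChar ℤ K)
    (f : ℤ → M) (n : ℤ) (i : ℕ) :
    ∑ j ∈ Finset.range i, quantumInt A (j + 1) •
        (skewPow A (n - 2 * j + 2) • f (n - 2 * j) -
          skewPow A (n - 2 * j - 2) • f (n - 2 * j - 2)) =
      skewPow A (n + 2) • ∑ k ∈ Finset.range i, f (n - 2 * k) -
        (quantumInt A i * skewPow A (n - 2 * i)) • f (n - 2 * i) := by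
  induction i with
  | zero => simp [quantumInt_zero]
  | succ i ih =>
    have h_succ := quantumInt_succ_mul_skewPow A i (n - 2 * i)
    rw [sub_add_cancel] at h_succ
    have h_index : n - 2 * ((i + 1 : ℕ) : ℤ) = n - 2 * i - 2 := by push_cast; ring
    rw [Finset.sum_range_succ, ih, smul_sub, smul_smul, smul_smul, h_succ,
      Finset.sum_range_succ (fun k : ℕ => f (n - 2 * k)), h_index]
    module

/-- The sequences `P` of the theorem, over an arbitrary commutative ring `K` with a character `A`
in the role of the powers of the Laurent variable. -/
structure IsTwistedChebyshev (A : AddChar ℤ K) (P : ℤ → K[X]) : Prop where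
  zero : P 0 = C (-A 2 - A (-2))
  one : P 1 = C (-A 3) * X
  recurrence (n : ℤ) : P n = C (A 1) * X * P (n - 1) - C (A 2) * P (n - 2)

namespace IsTwistedChebyshev

variable {A : AddChar ℤ K} {P : ℤ → K[X]}

lemma recurrence_neg (hP : IsTwistedChebyshev A P) (n : ℤ) :
    P n = C (A (-1)) * X * P (n + 1) - C (A (-2)) * P (n + 2) := by
  have h_one : C (A (-2)) * C (A 1) = C (A (-1)) := by
    rw [← C_mul, ← AddChar.map_add_eq_mul]; norm_num
  have h_two : C (A (-2)) * C (A 2) = 1 := by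
    rw [← C_mul, ← AddChar.map_add_eq_mul]; simp
  have h := hP.recurrence (n + 2)
  rw [show n + 2 - 1 = n + 1 by ring, add_sub_cancel_right] at h
  linear_combination C (A (-2)) * h - P n * h_two + X * P (n + 1) * h_one

protected lemma unique {P' : ℤ → K[X]} (hP : IsTwistedChebyshev A P)
    (hP' : IsTwistedChebyshev A P') : P = P' := by
  funext n
  induction n using Chebyshev.induct with
  | zero => rw [hP.zero, hP'.zero]
  | one => rw [hP.one, hP'.one]
  | add_two n ih_succ ih =>
    have h_pred : (n : ℤ) + 2 - 1 = n + 1 := by ring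
    rw [hP.recurrence, hP'.recurrence, h_pred, add_sub_cancel_right, ih_succ, ih]
  | neg_add_one n ih ih_succ =>
    have h_succ : -(n : ℤ) - 1 + 2 = -n + 1 := by ring
    rw [hP.recurrence_neg, hP'.recurrence_neg, h_succ, sub_add_cancel, ih_succ, ih]

end IsTwistedChebyshev

lemma isTwistedChebyshev_S (A : AddChar ℤ K) :
    IsTwistedChebyshev A fun n =>
      C (A (n - 2)) * Chebyshev.S K (n - 2) - C (A (n + 2)) * Chebyshev.S K n where
  zero := by
    simp only [zero_sub, zero_add, Chebyshev.S_neg_two, Chebyshev.S_zero, C_sub, C_neg]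
    ring
  one := by simp
  recurrence n := by
    have h_mul {k l m : ℤ} (h : k + l = m) : C (A k) * C (A l) = C (A m) := by
      rw [← C_mul, ← AddChar.map_add_eq_mul, h]
    have h_lower : C (A 1) * C (A (n - 1 - 2)) = C (A (n - 2)) := h_mul (by ring)
    have h_upper : C (A 1) * C (A (n - 1 + 2)) = C (A (n + 2)) := h_mul (by ring)
    have h_lower' : C (A 2) * C (A (n - 2 - 2)) = C (A (n - 2)) := h_mul (by ring)
    have h_upper' : C (A 2) * C (A (n - 2 + 2)) = C (A (n + 2)) := h_mul (by ring)
    have h_S := Chebyshev.S_eq K n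
    have h_S' := Chebyshev.S_eq K (n - 2)
    rw [show n - 2 - 1 = n - 1 - 2 by ring] at h_S'
    linear_combination C (A (n - 2)) * h_S' - C (A (n + 2)) * h_S
      - X * Chebyshev.S K (n - 1 - 2) * h_lower + X * Chebyshev.S K (n - 1) * h_upper
      + Chebyshev.S K (n - 2 - 2) * h_lower' - Chebyshev.S K (n - 2) * h_upper'

lemma IsTwistedChebyshev.sub_neg_eq {A : AddChar ℤ K} {P : ℤ → K[X]}
    (hP : IsTwistedChebyshev A P) (n : ℤ) :
    P n - P (-n) = skewPow A (n + 2) • Chebyshev.S K n -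
      skewPow A (n - 2) • Chebyshev.S K (n - 2) := by
  rw [hP.unique (isTwistedChebyshev_S A)]
  simp only [skewPow, Chebyshev.S_neg_sub_two, Chebyshev.S_neg, smul_eq_C_mul, C_add, C_neg,
    neg_sub', neg_add', sub_neg_eq_add]
  ring

lemma sum_Icc_skewPow (A : AddChar ℤ K) (n : ℤ) (i : ℕ) :
    ∑ k ∈ Finset.Icc (1 : ℤ) i, skewPow A (n - 4 * k + 2) =
      quantumInt A i * skewPow A (n - 2 * i) := by
  have h_shift := sum_Icc_add_sub_one (fun k => skewPow A (n - 4 * k + 2)) 1 i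
  rw [add_sub_cancel_left] at h_shift
  rw [h_shift, quantumInt_mul_skewPow]
  refine Finset.sum_congr rfl fun k _ => ?_
  congr 1
  ring

theorem stmt_13_general {A : AddChar ℤ K} {P : ℤ → K[X]} (hP : IsTwistedChebyshev A P) {n : ℤ}
    {i : ℕ} (hi : i ≤ n + 1) :
    C (-A (n + 2) + A (-n - 2)) *
        (∑ k ∈ Finset.Icc (0 : ℤ) (i - 1), Chebyshev.S K (n - 2 * k)) -
      C (∑ k ∈ Finset.Icc (1 : ℤ) i, (-A (n - 4 * k + 2) + A (-n + 4 * k - 2))) *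
        Chebyshev.S K (n - 2 * i) ∈
      Submodule.span K ((fun k : ℤ => P k - P (-k)) '' {k : ℤ | 1 ≤ k ∧ k ≤ n}) := by
  have h_lead : -A (n + 2) + A (-n - 2) = skewPow A (n + 2) := by
    rw [skewPow, neg_add']
  have h_sum : ∑ k ∈ Finset.Icc (0 : ℤ) (i - 1), Chebyshev.S K (n - 2 * k) =
      ∑ k ∈ Finset.range i, Chebyshev.S K (n - 2 * k) := by
    simpa using sum_Icc_add_sub_one (fun k => Chebyshev.S K (n - 2 * k)) 0 i
  have h_last : ∑ k ∈ Finset.Icc (1 : ℤ) i, (-A (n - 4 * k + 2) + A (-n + 4 * k - 2)) =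
      quantumInt A i * skewPow A (n - 2 * i) := by
    rw [← sum_Icc_skewPow]
    refine Finset.sum_congr rfl fun k _ => ?_
    rw [skewPow, neg_add', neg_sub', sub_neg_eq_add]
  rw [h_lead, h_sum, h_last, ← smul_eq_C_mul, ← smul_eq_C_mul, ← sum_quantumInt_smul_sub]
  refine Submodule.sum_mem _ fun j hj => Submodule.smul_mem _ _ ?_
  have hj : j < i := Finset.mem_range.mp hj
  rw [← hP.sub_neg_eq]
  exact sub_neg_mem_span P (abs_le.mpr ⟨by omega, by omega⟩)

end Character

/-- The powers of the Laurent variable, as a character. -/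
def laurentChar (k : Type*) [Semiring k] : AddChar ℤ (LaurentPolynomial k) :=
  ⟨T, LaurentPolynomial.T_zero, LaurentPolynomial.T_add⟩

lemma IsP.isTwistedChebyshev {P : ℤ → R[X]} (hP : IsP P) :
    IsTwistedChebyshev (laurentChar ℤ) P :=
  ⟨hP.1, hP.2.1, hP.2.2⟩

lemma IsQ.eq_S {Q : ℤ → R[X]} (hQ : IsQ Q) {n : ℤ} (hn : -2 ≤ n) : Q n = Chebyshev.S R n := by
  obtain ⟨h_neg_two, h_neg_one, h_rec⟩ := hQ
  suffices h : Q n = Chebyshev.S R n ∧ Q (n + 1) = Chebyshev.S R (n + 1) from h.1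
  induction n, hn using Int.leInduction with
  | base => simp [h_neg_two, h_neg_one]
  | succ n hn ih =>
    refine ⟨ih.2, ?_⟩
    have h_prev : n + 1 + 1 - 2 = n := by ring
    rw [h_rec _ (by omega), Chebyshev.S_eq, add_sub_cancel_right, h_prev, ih.1, ih.2]

theorem stmt_13 (P : ℤ → R[X]) (hP : IsP P) (Q : ℤ → R[X]) (hQ : IsQ Q)
    (n i : ℤ) (hn : 1 ≤ n) (hi1 : 1 ≤ i) (hi2 : i ≤ (n + 1) / 2) :
    C (-T (n + 2) + T (-n - 2)) * (∑ k ∈ Finset.Icc (0 : ℤ) (i - 1), Q (n - 2 * k)) -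
      C (∑ k ∈ Finset.Icc (1 : ℤ) i, (-T (n - 4 * k + 2) + T (-n + 4 * k - 2))) *
        Q (n - 2 * i) ∈
      Submodule.span R ((fun k : ℤ => P k - P (-k)) '' {k : ℤ | 1 ≤ k ∧ k ≤ n}) := by
  lift i to ℕ using by omega
  have h_S (k : ℤ) (hk : k ≤ i) : Q (n - 2 * k) = Chebyshev.S R (n - 2 * k) :=
    hQ.eq_S (by omega)
  rw [h_S i le_rfl, Finset.sum_congr rfl fun k hk =>
    h_S k ((Finset.mem_Icc.mp hk).2.trans (sub_le_self _ zero_le_one))]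
  exact stmt_13_general hP.isTwistedChebyshev (by omega)
end
end
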